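/- Let n ≥ 2 and let θ : [0,∞) → 𝒳ₙ be differentiable and satisfy dθ^j_t/dt = 2φ^j(θ_t) for all t ≥ 0 and all j. Then the minimal gap Δ(t) := min_{1≤j≤n}(θ^{j+1}_t − θ^j_t) is non-decreasing in t, and moreover 2π/n − Δ(t) ≤ (2π/n − Δ(0))·e^{−nt} for all t ≥ 0; consequently d(θ_t) ≤ (n−1)·(2π/n − Δ(0))·e^{−nt} for all t ≥ 0. -/

import Mathlib

open MeasureTheory Filter Set
open scoped Real Topology ENNReal Classical

noncomputable section

/-- The configuration space `𝒳ₙ` of `n` ordered points on (a lift of) the circle: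
`θ¹ < θ² < ⋯ < θⁿ < θ¹ + 2π`. -/
def Xspace (n : ℕ) : Set (Fin n → ℝ) :=
  {x | StrictMono x ∧ ∀ i j : Fin n, x i < x j + 2 * π}

/-- The value `θ^{j+1}`, with the convention `θ^{n+1} = θ¹ + 2π`. -/
def nextVal {n : ℕ} (x : Fin n → ℝ) (j : Fin n) : ℝ :=
  if h : (j : ℕ) + 1 < n then x ⟨(j : ℕ) + 1, h⟩ else x ⟨0, j.pos⟩ + 2 * π

/-- The gap `θ^{j+1} - θ^j` (with wrap-around convention). -/
def gap {n : ℕ} (x : Fin n → ℝ) (j : Fin n) : ℝ := nextVal x j - x j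

/-- The minimal gap `Δ(θ) = min_j (θ^{j+1} - θ^j)`. -/
def minGap {n : ℕ} (x : Fin n → ℝ) : ℝ := ⨅ j : Fin n, gap x j

/-- `d(θ) := max_j |2π/n - (θ^{j+1} - θ^j)|`. -/
def dGap {n : ℕ} (x : Fin n → ℝ) : ℝ := ⨆ j : Fin n, |2 * π / n - gap x j|

/-- `φ^j(θ) = ∑_{k ≠ j} cot((θ^j - θ^k)/2)`. -/
def phi {n : ℕ} (x : Fin n → ℝ) (j : Fin n) : ℝ :=
  ∑ k ∈ Finset.univ.erase j, Real.cot ((x j - x k) / 2)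

/-- `φ_a^j := (a/4) φ^j`. -/
def phiA {n : ℕ} (a : ℝ) (x : Fin n → ℝ) (j : Fin n) : ℝ := a / 4 * phi x j

/-- Absolute continuity of every coordinate of `θ` on `[0, T]`: each component is the
integral of a (locally) integrable function. -/
def AbsCont {n : ℕ} (T : ℝ) (θ : ℝ → Fin n → ℝ) : Prop :=
  ∃ v : ℝ → Fin n → ℝ, (∀ j, IntegrableOn (fun s => v s j) (Icc 0 T)) ∧
    ∀ t ∈ Icc (0 : ℝ) T, ∀ j, θ t j = θ 0 j + ∫ s in (0 : ℝ)..t, v s j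

/-- Truncated multiradial Dirichlet energy `J_T(θ)`. -/
def mEnergy (n : ℕ) (T : ℝ) (θ : ℝ → Fin n → ℝ) : ℝ≥0∞ :=
  if AbsCont T θ then
    ENNReal.ofReal (1 / 2) *
      ∫⁻ s in Ioc (0 : ℝ) T,
        ENNReal.ofReal (∑ j, (deriv (fun t => θ t j) s - 2 * phi (θ s) j) ^ 2)
  else ⊤

/-- Multiradial Dirichlet energy `J(θ) = lim_{T→∞} J_T(θ)`, the supremum of the
nondecreasing family `J_T(θ)`. -/
def mEnergyInf (n : ℕ) (θ : ℝ → Fin n → ℝ) : ℝ≥0∞ := ⨆ T : ℝ, mEnergy n T θ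

/-- The function `u ↦ cot u + u` is antitone on `(0, π)`. -/
lemma sub_le_cot_sub_cot {y z : ℝ} (hy : 0 < y) (hyz : y ≤ z) (hz : z < π) :
    z - y ≤ Real.cot y - Real.cot z := by
  have hderiv : ∀ x ∈ Ioo 0 π, HasDerivAt (fun u => Real.cot u + u)
      ((-Real.sin x * Real.sin x - Real.cos x * Real.cos x) / Real.sin x ^ 2 + 1) x := by
    intro x hx
    simp_rw [Real.cot_eq_cos_div_sin]
    exact ((Real.hasDerivAt_cos x).div (Real.hasDerivAt_sin x)
      (Real.sin_pos_of_mem_Ioo hx).ne').add (hasDerivAt_id x)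
  have hanti : AntitoneOn (fun u => Real.cot u + u) (Ioo 0 π) := by
    refine antitoneOn_of_deriv_nonpos (convex_Ioo 0 π)
      (fun x hx => (hderiv x hx).continuousAt.continuousWithinAt)
      (fun x hx => (hderiv x (interior_subset hx)).differentiableAt.differentiableWithinAt)
      fun x hx => ?_
    have hx' := interior_subset hx
    have hs := Real.sin_pos_of_mem_Ioo hx'
    rw [(hderiv x hx').deriv, div_add_one (by positivity)]
    apply div_nonpos_of_nonpos_of_nonneg _ (by positivity)
    nlinarith [sq_nonneg (Real.cos x)]
  have := hanti ⟨hy, hyz.trans_lt hz⟩ ⟨hy.trans_le hyz, hz⟩ hyz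
  simp only at this
  linarith

lemma cot_neg_eq (x : ℝ) : Real.cot (-x) = -Real.cot x := by
  simp [Real.cot_eq_cos_div_sin, div_neg]

lemma cot_add_pi_eq (x : ℝ) : Real.cot (x + π) = Real.cot x := by
  simp [Real.cot_eq_cos_div_sin]

lemma cot_sub_pi_eq (x : ℝ) : Real.cot (x - π) = Real.cot x := by
  simp [Real.cot_eq_cos_div_sin]

section Gaps

variable {m : ℕ} (x : Fin (m + 1) → ℝ)

lemma nextVal_castSucc (x : Fin (m + 1) → ℝ) (i : Fin m) :
    nextVal x i.castSucc = x i.succ := by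
  have h : (i : ℕ) + 1 < m + 1 := by omega
  simp only [nextVal, Fin.val_castSucc, h, dif_pos]
  rfl

lemma nextVal_last : nextVal x (Fin.last m) = x 0 + 2 * π := by
  simp [nextVal]

lemma nextVal_eq (j : Fin (m + 1)) :
    nextVal x j = x (j + 1) + if j = Fin.last m then 2 * π else 0 := by
  induction j using Fin.lastCases with
  | last => simp [nextVal_last]
  | cast i => simp [nextVal_castSucc, (Fin.castSucc_lt_last i).ne, Fin.coeSucc_eq_succ]

lemma sum_gap : ∑ j, gap x j = 2 * π := by
  have h : ∑ j, x (j + 1) = ∑ j, x j := Equiv.sum_comp (Equiv.addRight (1 : Fin (m + 1))) x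
  simp [gap, nextVal_eq, Finset.sum_add_distrib, h]

variable {x}

lemma nextVal_strictMono (hx : x ∈ Xspace (m + 1)) : StrictMono (nextVal x) := by
  intro i j hij
  induction i using Fin.lastCases with
  | last => exact absurd hij (Fin.le_last j).not_gt
  | cast i =>
    induction j using Fin.lastCases with
    | last => simpa [nextVal_castSucc, nextVal_last] using hx.2 _ _
    | cast j =>
      simpa [nextVal_castSucc] using
        hx.1 (Fin.succ_lt_succ_iff.2 (Fin.castSucc_lt_castSucc_iff.1 hij))

lemma nextVal_lt_add_two_pi (hx : x ∈ Xspace (m + 1)) (i j : Fin (m + 1)) :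
    nextVal x i < nextVal x j + 2 * π := by
  have hi : nextVal x i ≤ x 0 + 2 * π := by
    rw [← nextVal_last]; exact (nextVal_strictMono hx).monotone (Fin.le_last i)
  have hj : x 0 < nextVal x j := by
    induction j using Fin.lastCases with
    | last => rw [nextVal_last]; linarith [Real.pi_pos]
    | cast j => rw [nextVal_castSucc]; exact hx.1 (Fin.succ_pos j)
  linarith

lemma cot_sub_eq_cot_nextVal_sub (x : Fin (m + 1) → ℝ) (j k : Fin (m + 1)) :
    Real.cot ((x (j + 1) - x (k + 1)) / 2) = Real.cot ((nextVal x j - nextVal x k) / 2) := by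
  rw [nextVal_eq, nextVal_eq]
  split_ifs
  · congr 1; ring
  · rw [← cot_add_pi_eq]; congr 1; ring
  · rw [← cot_sub_pi_eq]; congr 1; ring
  · congr 1; ring

lemma phi_add_one (x : Fin (m + 1) → ℝ) (j : Fin (m + 1)) :
    phi x (j + 1) = ∑ k ∈ Finset.univ.erase j, Real.cot ((nextVal x j - nextVal x k) / 2) := by
  unfold phi
  symm
  refine Finset.sum_bij (fun k _ => k + 1) (by simp) (by simp)
    (fun k hk => ⟨k - 1, ?_, by simp⟩) fun k _ => (cot_sub_eq_cot_nextVal_sub x j k).symm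
  simpa [sub_eq_iff_eq_add] using hk

lemma gap_sub_div_two_le_cot_sub_cot (hx : x ∈ Xspace (m + 1)) {j k : Fin (m + 1)} (hkj : k ≠ j)
    (hle : gap x j ≤ gap x k) :
    (gap x k - gap x j) / 2 ≤
      Real.cot ((nextVal x j - nextVal x k) / 2) - Real.cot ((x j - x k) / 2) := by
  simp only [gap] at hle ⊢
  rcases lt_or_gt_of_ne hkj with h | h
  · have h₁ := nextVal_strictMono hx h
    have h₂ := hx.2 j k
    have := sub_le_cot_sub_cot (y := (nextVal x j - nextVal x k) / 2) (z := (x j - x k) / 2)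
      (by linarith) (by linarith) (by linarith)
    linarith
  · have h₁ := hx.1 h
    have h₂ := nextVal_lt_add_two_pi hx k j
    have := sub_le_cot_sub_cot (y := -((x j - x k) / 2)) (z := -((nextVal x j - nextVal x k) / 2))
      (by linarith) (by linarith) (by linarith)
    rw [cot_neg_eq, cot_neg_eq] at this
    linarith

/-- At a minimal gap, the drift of the gap dominates its distance to the equilibrium value. -/
lemma le_phi_sub_phi_of_gap_min (hx : x ∈ Xspace (m + 1)) {j : Fin (m + 1)}
    (hj : ∀ k, gap x j ≤ gap x k) :
    π - (m + 1 : ℕ) * gap x j / 2 ≤ phi x (j + 1) - phi x j := by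
  have hsum : ∑ k ∈ Finset.univ.erase j, (gap x k - gap x j) / 2 =
      π - (m + 1 : ℕ) * gap x j / 2 := by
    rw [Finset.sum_erase _ (by simp), ← Finset.sum_div, Finset.sum_sub_distrib, sum_gap]
    simp
    ring
  rw [phi_add_one, phi, ← Finset.sum_sub_distrib, ← hsum]
  exact Finset.sum_le_sum fun k hk =>
    gap_sub_div_two_le_cot_sub_cot hx (Finset.ne_of_mem_erase hk) (hj k)

lemma minGap_le (x : Fin (m + 1) → ℝ) (j : Fin (m + 1)) : minGap x ≤ gap x j :=
  ciInf_le (finite_range _).bddBelow j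

lemma minGap_le_two_pi_div (x : Fin (m + 1) → ℝ) : minGap x ≤ 2 * π / (m + 1 : ℕ) := by
  have h := Finset.sum_le_sum fun j (_ : j ∈ Finset.univ) => minGap_le x j
  rw [sum_gap, Finset.sum_const, Finset.card_univ, Fintype.card_fin, nsmul_eq_mul] at h
  rw [le_div_iff₀ (by positivity)]
  linarith

lemma dGap_le (hm : 1 ≤ m) (x : Fin (m + 1) → ℝ) :
    dGap x ≤ (((m + 1 : ℕ) : ℝ) - 1) * (2 * π / (m + 1 : ℕ) - minGap x) := by
  have hw := sub_nonneg.2 (minGap_le_two_pi_div x)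
  have hm' : (1 : ℝ) ≤ m := by exact_mod_cast hm
  set c : ℝ := 2 * π / (m + 1 : ℕ) with hc
  have hsum : ∑ k, (c - gap x k) = 0 := by
    rw [Finset.sum_sub_distrib, sum_gap, Finset.sum_const, Finset.card_univ, Fintype.card_fin,
      nsmul_eq_mul, hc, mul_div_cancel₀ _ (by positivity), sub_self]
  rw [Nat.cast_add_one, add_sub_cancel_right]
  refine ciSup_le fun j => abs_le.2 ⟨?_, ?_⟩
  · have h := Finset.sum_le_card_nsmul (Finset.univ.erase j) (fun k => c - gap x k) (c - minGap x)
      fun k _ => sub_le_sub_left (minGap_le x k) c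
    rw [Finset.card_erase_of_mem (Finset.mem_univ j), Finset.card_univ, Fintype.card_fin,
      nsmul_eq_mul, Nat.add_sub_cancel] at h
    have h' := Finset.add_sum_erase Finset.univ (fun k => c - gap x k) (Finset.mem_univ j)
    simp only [hsum] at h'
    rw [← hc]
    linarith
  · rw [← hc]
    nlinarith [minGap_le x j]

end Gaps

/-- The maximum of finitely many functions is bounded by its initial value as soon as the
derivative of every function attaining the maximum is nonpositive. -/
lemma le_of_deriv_nonpos_of_isMax {ι : Type*} [Fintype ι] [Nonempty ι] {f f' : ι → ℝ → ℝ}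
    {a b C : ℝ} (hf : ∀ i, ∀ t ∈ Ici a, HasDerivWithinAt (f i) (f' i t) (Ici a) t)
    (hf' : ∀ i, ∀ t ∈ Ici a, (∀ k, f k t ≤ f i t) → f' i t ≤ 0)
    (hC : ∀ i, f i a ≤ C) (hab : a ≤ b) (i : ι) : f i b ≤ C := by
  let F : ℝ → ℝ := fun t => Finset.univ.sup' Finset.univ_nonempty fun i => f i t
  have hcont : ContinuousOn F (Icc a b) := ContinuousOn.finset_sup'_apply _ fun i _ t ht =>
    ((hf i t ht.1).continuousWithinAt).mono Icc_subset_Ici_self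
  have hle : ∀ i t, f i t ≤ F t := fun i t =>
    Finset.le_sup' (fun i => f i t) (Finset.mem_univ i)
  refine (hle i b).trans <| image_le_of_liminf_slope_right_le_deriv_boundary hcont
    (B := fun _ => C) (B' := fun _ => 0) (Finset.sup'_le _ _ fun i _ => hC i) continuousOn_const
    (fun x _ => hasDerivWithinAt_const x _ C) (fun x hx r hr => ?_) (right_mem_Icc.2 hab)
  have hIoi : Ioi x ⊆ Ici a := fun z hz => hx.1.trans (le_of_lt hz)
  have key : ∀ i, ∀ᶠ z in 𝓝[>] x, f i z < F x + r * (z - x) := by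
    intro i
    rcases (hle i x).lt_or_eq with hlt | heq
    · have h₁ : ContinuousWithinAt (f i) (Ioi x) x :=
        (hf i x hx.1).continuousWithinAt.mono hIoi
      have h₂ : ContinuousWithinAt (fun z => F x + r * (z - x)) (Ioi x) x := by fun_prop
      exact h₁.eventually_lt h₂ (by simpa using hlt)
    · have hd := ((hf i x hx.1).mono hIoi).limsup_slope_le' (lt_irrefl x)
        ((hf' i x hx.1 fun k => heq ▸ hle k x).trans_lt hr)
      filter_upwards [hd, self_mem_nhdsWithin] with z hz hxz
      rw [slope_def_field, div_lt_iff₀ (sub_pos.2 hxz)] at hz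
      linarith
  refine Eventually.frequently ?_
  filter_upwards [eventually_all.2 key, self_mem_nhdsWithin] with z hz hxz
  rw [slope_def_field, div_lt_iff₀ (sub_pos.2 hxz), sub_lt_iff_lt_add']
  exact (Finset.sup'_lt_iff _).2 fun i _ => hz i

section Flow

variable {m : ℕ} {θ : ℝ → Fin (m + 1) → ℝ}

lemma hasDerivWithinAt_gap
    (hode : ∀ t ∈ Ici (0 : ℝ), ∀ j,
      HasDerivWithinAt (fun s => θ s j) (2 * phi (θ t) j) (Ici 0) t)
    {t : ℝ} (ht : t ∈ Ici (0 : ℝ)) (j : Fin (m + 1)) :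
    HasDerivWithinAt (fun s => gap (θ s) j)
      (2 * phi (θ t) (j + 1) - 2 * phi (θ t) j) (Ici 0) t := by
  simp only [gap, nextVal_eq]
  exact ((hode t ht (j + 1)).add_const _).sub (hode t ht j)

/-- Exponential contraction of the defect of the minimal gap between any two times. -/
lemma two_pi_div_sub_minGap_le (hX : ∀ t ∈ Ici (0 : ℝ), θ t ∈ Xspace (m + 1))
    (hode : ∀ t ∈ Ici (0 : ℝ), ∀ j,
      HasDerivWithinAt (fun s => θ s j) (2 * phi (θ t) j) (Ici 0) t)
    {s t : ℝ} (hs : 0 ≤ s) (hst : s ≤ t) :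
    2 * π / (m + 1 : ℕ) - minGap (θ t) ≤
      (2 * π / (m + 1 : ℕ) - minGap (θ s)) * Real.exp (-((m + 1 : ℕ) : ℝ) * (t - s)) := by
  set N : ℝ := ((m + 1 : ℕ) : ℝ) with hN
  have hN0 : 0 < N := by positivity
  have hbound : ∀ j, Real.exp (N * (t - s)) * (2 * π / N - gap (θ t) j) ≤
      2 * π / N - minGap (θ s) := by
    intro j
    refine le_of_deriv_nonpos_of_isMax (a := s)
      (f := fun j u => Real.exp (N * (u - s)) * (2 * π / N - gap (θ u) j))
      (f' := fun j u => Real.exp (N * (u - s)) * (N * 1) * (2 * π / N - gap (θ u) j) +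
        Real.exp (N * (u - s)) * (-(2 * phi (θ u) (j + 1) - 2 * phi (θ u) j)))
      (fun i u hu => ?_) (fun i u hu hmax => ?_) (fun i => ?_) hst j
    · have hg := (hasDerivWithinAt_gap hode (hs.trans hu) i).mono (Ici_subset_Ici.2 hs)
      exact ((((hasDerivWithinAt_id u _).sub_const s).const_mul N).exp).mul (hg.const_sub _)
    · have hmin : ∀ k, gap (θ u) i ≤ gap (θ u) k := fun k => by
        linarith [le_of_mul_le_mul_left (hmax k) (Real.exp_pos _)]
      have h := le_phi_sub_phi_of_gap_min (hX u (hs.trans hu)) hmin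
      rw [← hN] at h
      have hcancel : N * (2 * π / N) = 2 * π := mul_div_cancel₀ _ hN0.ne'
      rw [mul_assoc, ← mul_add]
      refine mul_nonpos_of_nonneg_of_nonpos (Real.exp_pos _).le ?_
      rw [mul_one, mul_sub, hcancel]
      linarith
    · simp only [sub_self, mul_zero, Real.exp_zero, one_mul]
      exact sub_le_sub_left (minGap_le (θ s) i) _
  have hexp : Real.exp (-N * (t - s)) * Real.exp (N * (t - s)) = 1 := by
    rw [← Real.exp_add]; simp
  rw [sub_le_comm]
  refine le_ciInf fun j => ?_
  have h := mul_le_mul_of_nonneg_left (hbound j) (Real.exp_pos (-N * (t - s))).le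
  rw [← mul_assoc, hexp] at h
  linarith

end Flow

/-- Along the zero-energy flow `dθ^j/dt = 2φ^j(θ)`, the minimal gap
`Δ(t)` is non-decreasing, `2π/n - Δ(t) ≤ (2π/n - Δ(0)) e^{-nt}`, and consequently
`d(θ_t) ≤ (n-1)(2π/n - Δ(0)) e^{-nt}`. -/
theorem zero_energy_flow_gap_estimates
    (n : ℕ) (hn : 2 ≤ n) (θ : ℝ → Fin n → ℝ)
    (hX : ∀ t ∈ Ici (0 : ℝ), θ t ∈ Xspace n)
    (hode : ∀ t ∈ Ici (0 : ℝ), ∀ j : Fin n,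
      HasDerivWithinAt (fun s => θ s j) (2 * phi (θ t) j) (Ici 0) t) :
    MonotoneOn (fun t => minGap (θ t)) (Ici 0) ∧
    (∀ t ∈ Ici (0 : ℝ),
      2 * π / n - minGap (θ t) ≤ (2 * π / n - minGap (θ 0)) * Real.exp (-(n : ℝ) * t)) ∧
    (∀ t ∈ Ici (0 : ℝ),
      dGap (θ t) ≤ ((n : ℝ) - 1) * (2 * π / n - minGap (θ 0)) * Real.exp (-(n : ℝ) * t)) := by
  obtain ⟨m, rfl⟩ : ∃ m, n = m + 1 := ⟨n - 1, by omega⟩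
  have hdecay : ∀ t ∈ Ici (0 : ℝ), 2 * π / (m + 1 : ℕ) - minGap (θ t) ≤
      (2 * π / (m + 1 : ℕ) - minGap (θ 0)) * Real.exp (-((m + 1 : ℕ) : ℝ) * t) := fun t ht => by
    simpa only [sub_zero] using two_pi_div_sub_minGap_le hX hode le_rfl ht
  refine ⟨fun s hs t _ hst => ?_, hdecay, fun t ht => ?_⟩
  · have h := two_pi_div_sub_minGap_le hX hode hs hst
    have hexp : Real.exp (-((m + 1 : ℕ) : ℝ) * (t - s)) ≤ 1 := by
      rw [Real.exp_le_one_iff, neg_mul, neg_nonpos]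
      exact mul_nonneg (Nat.cast_nonneg _) (sub_nonneg.2 hst)
    have := mul_le_of_le_one_right (sub_nonneg.2 (minGap_le_two_pi_div (θ s))) hexp
    simp only
    linarith
  · rw [mul_assoc]
    refine (dGap_le (by omega) (θ t)).trans (mul_le_mul_of_nonneg_left (hdecay t ht) ?_)
    rw [sub_nonneg]
    exact_mod_cast (by omega : 1 ≤ m + 1)

end
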